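/- arXiv:2404.10143 — 2 statements merged into one kernel-verified Lean document; each statement's English description precedes it below -/
import Mathlib

section
/- Let K be a field of characteristic zero and m a positive integer. If b₀, …, b_{m−1} : ℕ → K are P-recursive sequences, then their interleaving s : ℕ → K, defined by s(m·q + j) = b_j(q) for all q ∈ ℕ and 0 ≤ j < m (equivalently, s(n) = b_{n mod m}((n − (n mod m))/m)), is P-recursive. -/
/-- A sequence `a : ℕ → K` is P-recursive (holonomic) if there exist `d` and
polynomials `p 0, …, p d`, not all zero, with
`∑ i, p i (n) * a (n + i) = 0` for all `n`. -/
def IsPRecursive {K : Type*} [Field K] (a : ℕ → K) : Prop :=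
  ∃ (d : ℕ) (p : Fin (d + 1) → Polynomial K),
    (∃ i, p i ≠ 0) ∧
    ∀ n : ℕ, ∑ i : Fin (d + 1), (p i).eval (n : K) * a (n + (i : ℕ)) = 0

/-- sequences as a module over `K[X]`, `X` acting as multiplication by `n` -/
def SeqMod (K : Type*) := ℕ → K

noncomputable section SeqModSec

open Polynomial

variable {K : Type*} [Field K]

instance : AddCommGroup (SeqMod K) := inferInstanceAs (AddCommGroup (ℕ → K))

instance : Module K[X] (SeqMod K) :=
  Module.compHom (ℕ → K) (RingHom.pi fun n : ℕ => evalRingHom (n : K))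

theorem seqMod_smul (p : K[X]) (a : SeqMod K) (n : ℕ) : (p • a) n = p.eval (n : K) * a n := rfl

theorem seqMod_sum {ι : Type*} (t : Finset ι) (f : ι → SeqMod K) (n : ℕ) :
    (∑ i ∈ t, f i) n = ∑ i ∈ t, f i n := Finset.sum_apply n t f

/-- shift -/
def seqShift (i : ℕ) (a : ℕ → K) : SeqMod K := fun n => a (n + i)

/-- finitely supported form of P-recursiveness -/
def PRec (a : ℕ → K) : Prop :=
  ∃ l : ℕ →₀ K[X], l ≠ 0 ∧ ∀ n : ℕ, ∑ i ∈ l.support, (l i).eval (n : K) * a (n + i) = 0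

theorem PRec.of_isPRecursive {a : ℕ → K} (h : IsPRecursive a) : PRec a := by
  obtain ⟨d, p, ⟨i, hi⟩, h⟩ := h
  have key : ∀ i : Fin (d+1), Finsupp.embDomain Fin.valEmbedding (Finsupp.equivFunOnFinite.symm p)
      (i : ℕ) = p i := fun i => Finsupp.embDomain_apply_self Fin.valEmbedding _ i
  refine ⟨Finsupp.embDomain Fin.valEmbedding (Finsupp.equivFunOnFinite.symm p), ?_, ?_⟩
  · intro h0
    apply hi
    rw [← key i, h0]; rfl
  · intro n
    rw [← h n, Finsupp.support_embDomain, Finset.sum_map]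
    refine (Finset.sum_subset (Finset.subset_univ _) ?_).trans ?_
    · intro x _ hx
      have : p x = 0 := by simpa using hx
      have := key x
      simp_all
    · refine Finset.sum_congr rfl fun x _ => ?_
      have := key x
      simp only [Fin.valEmbedding_apply] at *
      rw [this]

theorem PRec.isPRecursive {a : ℕ → K} (h : PRec a) : IsPRecursive a := by
  obtain ⟨l, hl, h⟩ := h
  obtain ⟨i, hi⟩ := Finsupp.ne_iff.1 hl
  have hsub : l.support ⊆ Finset.range (l.support.sup id + 1) := by
    intro x hx
    rw [Finset.mem_range, Nat.lt_succ_iff]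
    exact Finset.le_sup (f := id) hx
  refine ⟨l.support.sup id, fun i => l i, ⟨⟨i, ?_⟩, hi⟩, fun n => ?_⟩
  · exact Finset.mem_range.1 (hsub (Finsupp.mem_support_iff.2 hi))
  · rw [Fin.sum_univ_eq_sum_range (fun i => (l i).eval (n : K) * a (n + i)), ← h n]
    symm
    refine Finset.sum_subset hsub fun x _ hx => ?_
    simp [Finsupp.notMem_support_iff.1 hx]

/-- localized module -/
abbrev SeqLoc (K : Type*) [Field K] := LocalizedModule (nonZeroDivisors K[X]) (SeqMod K)

/-- localization map -/
abbrev seqLoc : SeqMod K →ₗ[K[X]] SeqLoc K :=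
  LocalizedModule.mkLinearMap (nonZeroDivisors K[X]) (SeqMod K)

theorem PRec.exists_fg {a : ℕ → K} (h : PRec a) :
    ∃ N : Submodule (FractionRing K[X]) (SeqLoc K), N.FG ∧ ∀ i, seqLoc (seqShift i a) ∈ N := by
  obtain ⟨l, hl, h⟩ := h
  have hne : l.support.Nonempty := Finsupp.support_nonempty_iff.2 hl
  set d := l.support.max' hne with hd
  have hdm : d ∈ l.support := Finset.max'_mem _ _
  refine ⟨Submodule.span _ ((fun i => seqLoc (seqShift i a)) '' (Finset.range d : Set ℕ)),
    Submodule.fg_span ((Finset.finite_toSet _).image _), fun i => ?_⟩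
  induction i using Nat.strong_induction_on with
  | _ i ih =>
  rcases lt_or_ge i d with hid | hid
  · exact Submodule.subset_span ⟨i, by simpa using hid, rfl⟩
  obtain ⟨e, rfl⟩ := Nat.exists_eq_add_of_le hid
  have hrel : ∑ k ∈ l.support, ((l k).comp (X + C (e : K))) • seqShift (k + e) a = 0 := by
    funext n
    rw [seqMod_sum]
    refine Eq.trans ?_ (h (n + e))
    refine Finset.sum_congr rfl fun k _ => ?_
    rw [seqMod_smul]
    simp [seqShift, add_assoc, add_comm, add_left_comm]
  have hrel2 := congrArg seqLoc hrel
  rw [map_sum, map_zero, ← Finset.add_sum_erase _ _ hdm] at hrel2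
  have hc : (l d).comp (X + C (e : K)) ≠ 0 := by
    rw [Ne, comp_X_add_C_eq_zero_iff]
    exact Finsupp.mem_support_iff.1 hdm
  have hc' : algebraMap K[X] (FractionRing K[X]) ((l d).comp (X + C (e : K))) ≠ 0 := by
    simpa using hc
  rw [← Submodule.smul_mem_iff _ hc', algebraMap_smul, ← map_smul, eq_neg_of_add_eq_zero_left hrel2]
  refine Submodule.neg_mem _ (Submodule.sum_mem _ fun k hk => ?_)
  rw [map_smul, ← algebraMap_smul (FractionRing K[X])]
  refine Submodule.smul_mem _ _ (ih _ ?_)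
  have h1 := Finset.le_max' l.support k (Finset.mem_of_mem_erase hk)
  have h2 := Finset.ne_of_mem_erase hk
  omega

theorem PRec.of_fg {a : ℕ → K} (N : Submodule (FractionRing K[X]) (SeqLoc K)) (hN : N.FG)
    (h : ∀ i, seqLoc (seqShift i a) ∈ N) : PRec a := by
  have : Module.Finite (FractionRing K[X]) N := Module.Finite.iff_fg.2 hN
  have hnot : ¬ LinearIndependent K[X] (fun i : ℕ => seqLoc (seqShift i a)) := by
    intro hli
    rw [LinearIndependent.iff_fractionRing K[X] (FractionRing K[X])] at hli
    have h2 : LinearIndependent (FractionRing K[X]) (fun i : ℕ => (⟨_, h i⟩ : N)) :=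
      LinearIndependent.of_comp N.subtype hli
    exact not_finite_iff_infinite.2 inferInstance (LinearIndependent.finite h2)
  rw [linearIndependent_iff] at hnot
  push Not at hnot
  obtain ⟨l, hl, hl0⟩ := hnot
  rw [Finsupp.linearCombination_apply, Finsupp.sum] at hl
  simp only [← map_smul] at hl
  rw [← map_sum] at hl
  obtain ⟨⟨c, hcS⟩, hc⟩ :=
    (IsLocalizedModule.eq_zero_iff (nonZeroDivisors K[X]) (seqLoc (K := K))).1 hl
  have hc0 : c ≠ 0 := nonZeroDivisors.ne_zero hcS
  have hsup : (c • l).support = l.support := Finsupp.support_smul_eq hc0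
  refine ⟨c • l, smul_ne_zero hc0 hl0, fun n => ?_⟩
  rw [hsup]
  have hc1 : c • ∑ i ∈ l.support, l i • seqShift i a = 0 := hc
  have hc2 := congrFun hc1 n
  rw [seqMod_smul, seqMod_sum, Finset.mul_sum] at hc2
  refine Eq.trans (Finset.sum_congr rfl fun i _ => ?_) hc2
  rw [seqMod_smul, Finsupp.smul_apply, smul_eq_mul, eval_mul, mul_assoc]
  rfl

theorem PRec.interleave [CharZero K] (m : ℕ) (hm : 0 < m) (j : ℕ) (hj : j < m) {a : ℕ → K}
    (h : PRec a) : PRec (fun n => if n % m = j then a (n / m) else 0) := by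
  obtain ⟨l, hl, h⟩ := h
  have hm' : (m : K) ≠ 0 := by exact_mod_cast hm.ne'
  set g : K[X] := C (m : K)⁻¹ * (X - C (j : K)) with hg
  have hinj : ∀ p : K[X], p.comp g = 0 → p = 0 := by
    intro p hp
    have := congrArg (fun q => q.comp (C (m : K) * X + C (j : K))) hp
    simp only [comp_assoc, zero_comp] at this
    have hg2 : g.comp (C (m : K) * X + C (j : K)) = X := by
      simp only [hg, mul_comp, sub_comp, C_comp, X_comp, add_sub_cancel_right, ← mul_assoc, ← C_mul]
      simp [hm']
    rwa [hg2, comp_X] at this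
  let mulm : ℕ ↪ ℕ := ⟨fun k => m * k, fun x y hxy => Nat.eq_of_mul_eq_mul_left hm hxy⟩
  have hval : ∀ k, (Finsupp.embDomain mulm l) (m * k) = l k :=
    fun k => Finsupp.embDomain_apply_self mulm l k
  refine ⟨(Finsupp.embDomain mulm l).mapRange (fun p => p.comp g) (by simp), ?_, ?_⟩
  · intro h0
    apply hl
    ext1 k
    have := DFunLike.congr_fun h0 (m * k)
    rw [Finsupp.mapRange_apply, hval] at this
    exact hinj _ this
  · intro n
    have hsupp : ((Finsupp.embDomain mulm l).mapRange (fun p => p.comp g) (by simp)).support ⊆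
        (l.support.map mulm) := by
      rw [← Finsupp.support_embDomain]
      exact Finsupp.support_mapRange
    rw [Finset.sum_subset hsupp fun x _ hx => by
      rw [Finsupp.notMem_support_iff.1 hx]; simp]
    rw [Finset.sum_map]
    have e1 : ∀ k, mulm k = m * k := fun k => rfl
    simp only [e1, Finsupp.mapRange_apply, hval, Nat.add_mul_mod_self_left]
    by_cases hn : n % m = j
    · simp only [hn, if_true, Nat.add_mul_div_left _ _ hm]
      rw [← h (n / m)]
      refine Finset.sum_congr rfl fun k _ => ?_
      congr 1
      rw [eval_comp]
      congr 1
      have : (n : K) = m * (n / m : ℕ) + j := by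
        rw [← hn]; exact_mod_cast (Nat.div_add_mod n m).symm
      simp only [hg, eval_mul, eval_C, eval_sub, eval_X]
      rw [this]
      field_simp
      ring
    · simp [hn]

end SeqModSec

theorem stmt7 {K : Type*} [Field K] [CharZero K] (m : ℕ) (hm : 0 < m)
    (b : Fin m → ℕ → K) (hb : ∀ j : Fin m, IsPRecursive (b j))
    (s : ℕ → K)
    (hs : ∀ (q : ℕ) (j : ℕ) (hj : j < m), s (m * q + j) = b ⟨j, hj⟩ q) :
    IsPRecursive s := by
  have h1 := fun j : Fin m =>
    ((PRec.of_isPRecursive (hb j)).interleave m hm j.1 j.2).exists_fg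
  choose N hN hmem using h1
  refine (PRec.of_fg (⨆ j, N j) (Submodule.fg_iSup _ hN) fun i => ?_).isPRecursive
  have : seqShift i s = ∑ j : Fin m, seqShift i (fun n => if n % m = j then b j (n / m) else 0) := by
    funext n
    rw [seqMod_sum]
    simp only [seqShift]
    have hlt := Nat.mod_lt (n + i) hm
    rw [Finset.sum_eq_single ⟨(n + i) % m, hlt⟩]
    · rw [if_pos rfl, ← hs, Nat.div_add_mod]
    · intro j _ hj
      rw [if_neg]
      intro h
      exact hj (Fin.ext h.symm)
    · simp
  rw [this, map_sum]
  exact Submodule.sum_mem _ fun j _ => (le_iSup N j) (hmem j i)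
end

section
/- For every positive integer n, the number of quadruples (w, x, y, z) ∈ {1, …, n}⁴ such that min(|w−x|, |w−y|) = min(|x−y|, |x−z|) equals 4/9 + (31/12)·n − 3·n² + (67/36)·n³ − (n/4)·χ_{n≡0 (mod 2)} − (4/9)·χ_{n≡0 (mod 3)} − (8/9)·χ_{n≡1 (mod 3)} (as a rational number). -/
open Finset

/-- indicator -/
abbrev ind (P : Prop) [Decidable P] : ℕ := if P then 1 else 0

def dd (x y : ℕ) : ℕ := (x - y) + (y - x)

def AA (n m x y : ℕ) : ℕ := ∑ w ∈ range n, ind (min (dd w x) (dd w y) = m)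
def BB (n m x y : ℕ) : ℕ := ∑ z ∈ range n, ind (min (dd x y) (dd x z) = m)

lemma sum_single (n a : ℕ) : ∑ w ∈ range n, ind (w = a) = ind (a < n) := by
  simp [ind, Finset.sum_ite_eq']

lemma sum_left (n a m : ℕ) (ha : a < n) :
    ∑ w ∈ range n, ind (w + m = a) = ind (m ≤ a) := by
  by_cases h : m ≤ a
  · rw [← show ind (a - m < n) = ind (m ≤ a) by simp only [ind]; split_ifs <;> omega, ← sum_single]
    refine sum_congr rfl fun w _ => ?_
    simp only [ind]; split_ifs <;> omega
  · rw [show ind (m ≤ a) = 0 by simp [ind, h]]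
    refine sum_eq_zero fun w _ => ?_
    simp only [ind]; split_ifs <;> omega

lemma sum_le (n a m : ℕ) (ha : a < n) :
    ∑ w ∈ range n, ind (w + m ≤ a) = a + 1 - m := by
  have : ∀ k, ∑ w ∈ range k, ind (w + m ≤ a) = min k (a + 1 - m) := by
    intro k
    induction k with
    | zero => simp
    | succ k ih => rw [sum_range_succ, ih]; simp only [ind]; split_ifs <;> omega
  rw [this]; omega

lemma sum_ge (n a : ℕ) :
    ∑ w ∈ range n, ind (a ≤ w) = n - a := by
  induction n with
  | zero => simp
  | succ k ih => rw [sum_range_succ, ih]; simp only [ind]; split_ifs <;> omega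

lemma AA_eq (n m x y : ℕ) (hm : 0 < m) (hx : x < y) (hy : y < n) (h : m ≤ y - x) :
    AA n m x y = ind (m ≤ x) + ind (y + m < n) + (ind (2 * m ≤ y - x) + ind (2 * m < y - x)) := by
  have key : AA n m x y = ∑ w ∈ range n, (ind (w + m = x) + ind (w = y + m)
      + ((if 2 * m ≤ y - x then ind (w = x + m) else 0)
        + (if 2 * m < y - x then ind (w + m = y) else 0))) := by
    refine sum_congr rfl fun w _ => ?_
    generalize hq : (min _ _ : ℕ) = q
    simp only [ind]
    simp only [dd] at hq
    split_ifs <;> omega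
  rw [key, sum_add_distrib, sum_add_distrib, sum_add_distrib, sum_left _ _ _ (by omega), sum_single]
  congr 2
  · split_ifs with h1
    · rw [sum_single]; simp only [ind]; split_ifs <;> omega
    · simp
  · split_ifs with h1
    · rw [sum_left _ _ _ hy]; simp only [ind]; split_ifs <;> omega
    · simp

lemma AA_comm (n m x y : ℕ) : AA n m x y = AA n m y x := by
  simp only [AA, min_comm]

lemma BB_lt (n m x y : ℕ) (h : dd x y < m) : BB n m x y = 0 := by
  refine sum_eq_zero fun w _ => ?_
  simp only [ind]; split_ifs <;> omega

lemma BB_eq (n m x y : ℕ) (hm : 0 < m) (hx : x < n) (h : dd x y = m) :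
    BB n m x y = (x + 1 - m) + (n - (x + m)) := by
  rw [← sum_le n x m hx, ← sum_ge n (x+m), ← sum_add_distrib]
  refine sum_congr rfl fun w _ => ?_
  rw [h]; generalize hq : (min _ _ : ℕ) = q
  simp only [ind]
  simp only [dd] at hq
  split_ifs <;> omega

lemma BB_gt (n m x y : ℕ) (hm : 0 < m) (hx : x < n) (h : m < dd x y) :
    BB n m x y = ind (m ≤ x) + ind (x + m < n) := by
  rw [← sum_left n x m hx, ← sum_single n (x+m), ← sum_add_distrib]
  refine sum_congr rfl fun w _ => ?_
  generalize dd x y = c at *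
  generalize hq : (min _ _ : ℕ) = q
  simp only [ind]
  simp only [dd] at hq
  split_ifs <;> omega

lemma dd_refl (n x y : ℕ) (hx : x < n) (hy : y < n) : dd (n - 1 - x) (n - 1 - y) = dd x y := by
  simp only [dd]; omega

lemma AA_refl (n m x y : ℕ) (hx : x < n) (hy : y < n) :
    AA n m (n - 1 - x) (n - 1 - y) = AA n m x y := by
  unfold AA
  rw [← sum_range_reflect]
  refine sum_congr rfl fun w hw => ?_
  rw [mem_range] at hw
  rw [dd_refl n w x hw hx, dd_refl n w y hw hy]

lemma BB_refl (n m x y : ℕ) (hx : x < n) (hy : y < n) :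
    BB n m (n - 1 - x) (n - 1 - y) = BB n m x y := by
  unfold BB
  rw [← sum_range_reflect]
  refine sum_congr rfl fun w hw => ?_
  rw [mem_range] at hw
  rw [dd_refl n x w hx hw, dd_refl n x y hx hy]

/-- the slice with common value m -/
def TT (n m : ℕ) : ℕ := ∑ x ∈ range n, ∑ y ∈ range n, AA n m x y * BB n m x y

def RR (n m x : ℕ) : ℕ := ∑ c ∈ range (n - 1 - x), AA n m x (x + 1 + c) * BB n m x (x + 1 + c)

lemma sum_gt (n x : ℕ) (hx : x < n) (f : ℕ → ℕ) :
    ∑ y ∈ range n, (if x < y then f y else 0) = ∑ c ∈ range (n - 1 - x), f (x + 1 + c) := by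
  obtain ⟨r, rfl⟩ : ∃ r, n = (x + 1) + r := ⟨n - (x+1), by omega⟩
  rw [sum_range_add]
  rw [sum_eq_zero (s := range (x+1)), zero_add]
  · rw [show x + 1 + r - 1 - x = r by omega]
    refine sum_congr rfl fun c _ => ?_
    rw [if_pos (by omega)]
  · intro y hy; rw [mem_range] at hy; rw [if_neg (by omega)]

lemma TT_eq (n m : ℕ) (hm : 0 < m) : TT n m = 2 * ∑ x ∈ range n, RR n m x := by
  have h1 : TT n m = ∑ x ∈ range n, ∑ y ∈ range n, (if x < y then AA n m x y * BB n m x y else 0)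
      + ∑ x ∈ range n, ∑ y ∈ range n, (if y < x then AA n m x y * BB n m x y else 0) := by
    unfold TT
    simp_rw [← sum_add_distrib]
    refine sum_congr rfl fun x _ => sum_congr rfl fun y _ => ?_
    rcases lt_trichotomy x y with h | h | h
    · rw [if_pos h, if_neg (by omega), add_zero]
    · subst h
      rw [BB_lt n m x x (by simp [dd, hm])]; simp
    · rw [if_pos h, if_neg (by omega), zero_add]
  have h2 : ∑ x ∈ range n, ∑ y ∈ range n, (if y < x then AA n m x y * BB n m x y else 0)
      = ∑ x ∈ range n, ∑ y ∈ range n, (if x < y then AA n m x y * BB n m x y else 0) := by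
    rw [← sum_range_reflect]
    refine sum_congr rfl fun x hx => ?_
    rw [← sum_range_reflect]
    refine sum_congr rfl fun y hy => ?_
    rw [mem_range] at hx hy
    rw [AA_refl n m x y hx hy, BB_refl n m x y hx hy]
    by_cases h : x < y
    · rw [if_pos h, if_pos (by omega)]
    · rw [if_neg h, if_neg (by omega)]
  rw [h1, h2, ← two_mul]
  congr 1
  refine sum_congr rfl fun x hx => ?_
  rw [mem_range] at hx
  rw [sum_gt n x hx (fun y => AA n m x y * BB n m x y), RR]

lemma RR_partial (n m x : ℕ) (hm : 0 < m) (hx : x < n) (k : ℕ) (hk : k ≤ n - 1 - x) :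
    ∑ c ∈ range k, AA n m x (x + 1 + c) * BB n m x (x + 1 + c) =
      if m ≤ k then (ind (m ≤ x) + ind (x + 2 * m < n)) * ((x + 1 - m) + (n - (x + m)))
        + (ind (m ≤ x) + 1) * (ind (m ≤ x) * (k - m) + min (k - m) (n - 1 - x - 2 * m)
          + ind (2 * m ≤ k) + 2 * (k - 2 * m)) else 0 := by
  induction k with
  | zero => simp; omega
  | succ k ih =>
    rw [sum_range_succ, ih (by omega)]
    rcases lt_trichotomy (k + 1) m with h | h | h
    · rw [BB_lt n m x _ (by simp only [dd]; omega), if_neg (by omega), if_neg (by omega)]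
      simp
    · rw [BB_eq n m x _ hm hx (by simp only [dd]; omega),
        AA_eq n m x _ hm (by omega) (by omega) (by omega), if_neg (by omega), if_pos (by omega)]
      generalize (x + 1 - m) + (n - (x + m)) = L
      simp only [ind]
      split_ifs <;> omega
    · rw [BB_gt n m x _ hm hx (by simp only [dd]; omega),
        AA_eq n m x _ hm (by omega) (by omega) (by omega), if_pos (by omega), if_pos (by omega)]
      generalize (x + 1 - m) + (n - (x + m)) = L
      rw [add_assoc]
      congr 1
      simp only [ind]
      split_ifs <;> omega

lemma RR_eq (n m x : ℕ) (hm : 0 < m) (hx : x < n) :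
    RR n m x = (if m ≤ x ∧ x + m < n then (n + 1 - 2 * m) + 2 * (n - 1 - x - m) else 0)
      + (if x + 2 * m < n then (x + 1 - m) + (n - x - m) +
          (ind (m ≤ x) + 1) * (3 * (n - 1 - x - 2 * m) + 1) else 0) := by
  rw [RR, RR_partial n m x hm hx _ le_rfl]
  simp only [ind]
  split_ifs <;> omega

lemma sum_lt_cut (n a : ℕ) (f : ℕ → ℕ) :
    ∑ x ∈ range n, (if x + a < n then f x else 0) = ∑ x ∈ range (n - a), f x := by
  rw [← sum_filter]
  refine sum_congr ?_ fun _ _ => rfl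
  ext x; simp; omega

lemma sum_mid (n a : ℕ) (f : ℕ → ℕ) :
    ∑ x ∈ range n, (if a ≤ x then f x else 0) = ∑ x ∈ range (n - a), f (a + x) := by
  rcases le_total n a with h | h
  · rw [Nat.sub_eq_zero_of_le h, range_zero, sum_empty]
    refine sum_eq_zero fun x hx => ?_
    rw [mem_range] at hx; rw [if_neg (by omega)]
  · obtain ⟨r, rfl⟩ := Nat.exists_eq_add_of_le h
    rw [sum_range_add, sum_eq_zero (s := range a), zero_add, Nat.add_sub_cancel_left]
    · refine sum_congr rfl fun c _ => ?_
      rw [if_pos (by omega)]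
    · intro y hy; rw [mem_range] at hy; rw [if_neg (by omega)]

lemma sum1 (j : ℕ) : ∑ i ∈ range j, ((j + 1) + 2 * (j - 1 - i)) = 2 * j ^ 2 := by
  rw [sum_range_reflect (fun i => (j + 1) + 2 * i) j, sum_add_distrib, ← mul_sum, mul_comm 2,
    sum_range_id_mul_two]
  cases j <;> simp; ring

lemma sum2 (j m : ℕ) : ∑ i ∈ range j, ((j + m - i) + (3 * (j - 1 - i) + 1)) = 2 * j ^ 2 + j * m := by
  have : ∑ i ∈ range j, ((j + m - i) + (3 * (j - 1 - i) + 1))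
    = ∑ i ∈ range j, ((m + 2) + 2 * (2 * (j - 1 - i))) := by
    refine sum_congr rfl fun i hi => ?_
    rw [mem_range] at hi; omega
  rw [this, sum_range_reflect (fun i => (m + 2) + 2 * (2 * i)) j, sum_add_distrib, ← mul_sum,
    ← mul_sum, ← mul_assoc, mul_comm, mul_comm 2 2, ← mul_assoc,  mul_comm]
  have := sum_range_id_mul_two j
  cases j
  · simp
  · simp at *; nlinarith

lemma sum3 (l : ℕ) : ∑ i ∈ range l, ((i + 1) + (3 * (l - 1 - i) + 1)) = 2 * l ^ 2 := by
  have h := sum_range_id_mul_two l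
  have h2 := sum_range_reflect (fun i => 3 * i + 1) l
  rw [sum_add_distrib, h2, ← sum_add_distrib]
  have : ∑ i ∈ range l, ((i + 1) + (3 * i + 1)) = ∑ i ∈ range l, (2 + 4 * i) :=
    sum_congr rfl fun i _ => by ring
  rw [this, sum_add_distrib, ← mul_sum]
  cases l
  · simp
  · simp at *; nlinarith

lemma TT_closed (n m : ℕ) (hm : 0 < m) :
    TT n m = 2 * (4 * (n - 2 * m) ^ 2 + (n - 2 * m) * m + 2 * (n - 3 * m) ^ 2) := by
  rw [TT_eq n m hm]
  congr 1
  have e : ∀ x ∈ range n, RR n m x =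
      (if x + m < n then (if m ≤ x then (n + 1 - 2 * m) + 2 * (n - 1 - x - m) else 0) else 0)
      + ((if x + 2 * m < n then (n - 2 * m + m - x) + (3 * (n - 2 * m - 1 - x) + 1) else 0)
        + (if x + 2 * m < n then
          (if m ≤ x then (x + 1 - m) + (3 * (n - 2 * m - 1 - x) + 1) else 0) else 0)) := by
    intro x hx
    rw [RR_eq n m x hm (mem_range.1 hx)]
    simp only [ind]
    split_ifs <;> omega
  rw [sum_congr rfl e, sum_add_distrib, sum_add_distrib, sum_lt_cut, sum_lt_cut, sum_lt_cut,
    sum_mid, sum_mid, sum2]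
  have e1 := sum1 (n - 2 * m)
  have e3 := sum3 (n - 3 * m)
  rw [show n - m - m = n - 2 * m by omega, show n - 2 * m - m = n - 3 * m by omega]
  have f1 : ∑ x ∈ range (n - 2 * m), (n + 1 - 2 * m + 2 * (n - 1 - (m + x) - m))
      = 2 * (n - 2 * m) ^ 2 := by
    rw [← e1]
    refine sum_congr rfl fun i hi => ?_
    rw [mem_range] at hi; omega
  have f3 : ∑ x ∈ range (n - 3 * m), (m + x + 1 - m + (3 * (n - 2 * m - 1 - (m + x)) + 1))
      = 2 * (n - 3 * m) ^ 2 := by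
    rw [← e3]
    refine sum_congr rfl fun i hi => ?_
    rw [mem_range] at hi; omega
  rw [f1, f3]; ring

lemma AA_zero_same (n x : ℕ) (hx : x < n) : AA n 0 x x = 1 := by
  rw [← show ind (x < n) = 1 by simp [ind, hx], ← sum_single]
  refine sum_congr rfl fun w _ => ?_
  generalize hq : (min _ _ : ℕ) = q
  simp only [ind]
  simp only [dd] at hq
  split_ifs <;> omega

lemma AA_zero_ne (n x y : ℕ) (hx : x < n) (hy : y < n) (h : x ≠ y) : AA n 0 x y = 2 := by
  have : ind (x < n) + ind (y < n) = 2 := by simp [ind, hx, hy]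
  rw [← this, ← sum_single, ← sum_single, ← sum_add_distrib]
  refine sum_congr rfl fun w _ => ?_
  generalize hq : (min _ _ : ℕ) = q
  simp only [ind]
  simp only [dd] at hq
  split_ifs <;> omega

lemma BB_zero_same (n x : ℕ) : BB n 0 x x = n := by
  simp [BB, dd, ind]

lemma BB_zero_ne (n x y : ℕ) (hx : x < n) (h : x ≠ y) : BB n 0 x y = 1 := by
  rw [← show ind (x < n) = 1 by simp [ind, hx], ← sum_single]
  refine sum_congr rfl fun w _ => ?_
  generalize hq : (min _ _ : ℕ) = q
  simp only [ind]
  simp only [dd] at hq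
  split_ifs <;> omega

lemma TT_zero (k : ℕ) : TT (k + 1) 0 = (k + 1) * (3 * k + 1) := by
  have : ∀ x ∈ range (k + 1), ∑ y ∈ range (k + 1), AA (k+1) 0 x y * BB (k+1) 0 x y = 3 * k + 1 := by
    intro x hx
    have h2 : ∀ y ∈ range (k + 1), y ≠ x → AA (k+1) 0 x y * BB (k+1) 0 x y = 2 := by
      intro y hy hne
      rw [mem_range] at hx hy
      rw [AA_zero_ne _ _ _ hx hy hne.symm, BB_zero_ne _ _ _ hx hne.symm]
    rw [← add_sum_erase _ _ hx, sum_congr rfl (g := fun _ => 2), sum_const, card_erase_of_mem hx,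
      AA_zero_same _ _ (mem_range.1 hx), BB_zero_same]
    · simp; ring
    · intro y hy
      exact h2 y (mem_of_mem_erase hy) (ne_of_mem_erase hy)
  rw [TT, sum_congr rfl this]; simp

def VV (n : ℕ) : ℕ := ∑ m ∈ range n, (n - 3 * (m + 1)) ^ 2
def UU (n : ℕ) : ℕ := ∑ m ∈ range n, (4 * (n - 2 * (m + 1)) ^ 2 + (n - 2 * (m + 1)) * (m + 1))
def WW (n : ℕ) : ℕ := ∑ m ∈ range n, (n - 2 * (m + 1))

lemma VV_step (n : ℕ) : VV (n + 3) = VV n + n ^ 2 := by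
  have : VV (n + 3) = ∑ m ∈ range (n + 3), (n - 3 * m) ^ 2 :=
    sum_congr rfl fun m _ => by rw [show n + 3 - 3 * (m + 1) = n - 3 * m by omega]
  rw [this, sum_range_succ', sum_range_succ, sum_range_succ, VV,
    show n - 3 * (n + 1) = 0 by omega, show n - 3 * (n + 1 + 1) = 0 by omega]
  simp

lemma WW_step (n : ℕ) : WW (n + 2) = WW n + n := by
  have : WW (n + 2) = ∑ m ∈ range (n + 2), (n - 2 * m) :=
    sum_congr rfl fun m _ => by omega
  rw [this, sum_range_succ', sum_range_succ, WW, show n - 2 * (n + 1) = 0 by omega]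
  simp

lemma UU_step (n : ℕ) : UU (n + 2) = UU n + WW n + 4 * n ^ 2 + n := by
  have : UU (n + 2) = ∑ m ∈ range (n + 2), (4 * (n - 2 * m) ^ 2 + (n - 2 * m) * m + (n - 2 * m)) :=
    sum_congr rfl fun m _ => by rw [show n + 2 - 2 * (m + 1) = n - 2 * m by omega]; ring
  rw [this, sum_range_succ', sum_range_succ, show n - 2 * (n + 1) = 0 by omega, UU, WW,
    ← sum_add_distrib]
  simp; ring

lemma VV_closed : ∀ n : ℕ, (VV n : ℚ) = (2 * (n : ℚ) ^ 3 - 9 * (n : ℚ) ^ 2 + 9 * n + 2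
    - 2 * (if n % 3 = 0 then 1 else 0) - 4 * (if n % 3 = 1 then 1 else 0)) / 18
  | 0 => by simp [VV]
  | 1 => by norm_num [VV]
  | 2 => by norm_num [VV, sum_range_succ]
  | n + 3 => by
    rw [VV_step, Nat.add_mod_right]
    push_cast
    rw [VV_closed n]
    ring

lemma WW_closed : ∀ n : ℕ, (WW n : ℚ) = (((n : ℚ) - 1) ^ 2 - (if n % 2 = 0 then 1 else 0)) / 4
  | 0 => by simp [WW]
  | 1 => by norm_num [WW]
  | n + 2 => by
    rw [WW_step, Nat.add_mod_right]
    push_cast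
    rw [WW_closed n]
    ring

lemma UU_closed : ∀ n : ℕ, (UU n : ℚ) = (17 * (n : ℚ) ^ 3 - 48 * (n : ℚ) ^ 2 + 31 * n
    - 3 * n * (if n % 2 = 0 then 1 else 0)) / 24
  | 0 => by simp [UU]
  | 1 => by norm_num [UU]
  | n + 2 => by
    rw [UU_step, Nat.add_mod_right]
    push_cast
    rw [UU_closed n, WW_closed n]
    ring

lemma sum_TT (k : ℕ) : ∑ m ∈ range (k + 1), TT (k + 1) m
    = (k + 1) * (3 * k + 1) + 2 * UU (k + 1) + 4 * VV (k + 1) := by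
  rw [sum_range_succ', TT_zero, UU, VV, sum_range_succ, sum_range_succ,
    show k + 1 - 2 * (k + 1) = 0 by omega, show k + 1 - 3 * (k + 1) = 0 by omega,
    sum_congr rfl (fun m _ => TT_closed (k + 1) (m + 1) (Nat.succ_pos m)), ← mul_sum,
    sum_add_distrib, ← mul_sum]
  ring

lemma sum_Icc_range (n : ℕ) (f : ℕ → ℕ) : ∑ x ∈ Icc 1 n, f x = ∑ x ∈ range n, f (x + 1) := by
  rw [range_eq_Ico, sum_Ico_add' f 0 n 1]
  rfl

lemma count_eq (n : ℕ) :
    ((Finset.Icc 1 n ×ˢ Finset.Icc 1 n ×ˢ Finset.Icc 1 n ×ˢ Finset.Icc 1 n).filter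
        (fun p : ℕ × ℕ × ℕ × ℕ =>
          min ((p.1 : ℤ) - p.2.1).natAbs ((p.1 : ℤ) - p.2.2.1).natAbs =
            min ((p.2.1 : ℤ) - p.2.2.1).natAbs ((p.2.1 : ℤ) - p.2.2.2).natAbs)).card
      = ∑ m ∈ range n, TT n m := by
  have hd : ∀ a b : ℕ, (((a + 1 : ℕ) : ℤ) - ((b + 1 : ℕ) : ℤ)).natAbs = dd a b := by
    intro a b; simp only [dd]; omega
  rw [card_filter]
  simp only [sum_product, sum_Icc_range, hd]
  have hr : ∑ m ∈ range n, TT n m = ∑ w ∈ range n, ∑ x ∈ range n, ∑ y ∈ range n, ∑ z ∈ range n,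
      ∑ m ∈ range n, ind (min (dd w x) (dd w y) = m) * ind (min (dd x y) (dd x z) = m) := by
    simp only [TT, AA, BB, sum_mul_sum]
    rw [sum_comm]
    conv_rhs => rw [sum_comm]
    refine sum_congr rfl fun x _ => ?_
    rw [sum_comm]
    conv_rhs => rw [sum_comm]
    refine sum_congr rfl fun y _ => ?_
    rw [sum_comm]
    refine sum_congr rfl fun w _ => ?_
    rw [sum_comm]
  rw [hr]
  refine sum_congr rfl fun w hw => sum_congr rfl fun x hx => sum_congr rfl fun y hy =>
    sum_congr rfl fun z hz => ?_
  rw [mem_range] at hw hx hy hz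
  have h1 : min (dd w x) (dd w y) < n := by simp only [dd]; omega
  generalize min (dd w x) (dd w y) = a at *
  generalize min (dd x y) (dd x z) = b at *
  rw [sum_eq_single_of_mem a (mem_range.2 h1)]
  · simp [ind, eq_comm]
  · intro c _ hc
    simp [ind, hc.symm]



theorem stmt15 (n : ℕ) (hn : 0 < n) :
    (((Finset.Icc 1 n ×ˢ Finset.Icc 1 n ×ˢ Finset.Icc 1 n ×ˢ Finset.Icc 1 n).filter
        (fun p : ℕ × ℕ × ℕ × ℕ =>
          min ((p.1 : ℤ) - p.2.1).natAbs ((p.1 : ℤ) - p.2.2.1).natAbs =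
            min ((p.2.1 : ℤ) - p.2.2.1).natAbs ((p.2.1 : ℤ) - p.2.2.2).natAbs)).card : ℚ)
      = 4 / 9 + (31 / 12) * (n : ℚ) - 3 * (n : ℚ) ^ 2 + (67 / 36) * (n : ℚ) ^ 3
        - ((n : ℚ) / 4) * (if n % 2 = 0 then 1 else 0)
        - (4 / 9) * (if n % 3 = 0 then 1 else 0)
        - (8 / 9) * (if n % 3 = 1 then 1 else 0) := by
  obtain ⟨k, rfl⟩ : ∃ k, n = k + 1 := ⟨n - 1, by omega⟩
  rw [count_eq, sum_TT]
  rw [Nat.cast_add, Nat.cast_add, Nat.cast_mul 2, Nat.cast_mul 4, UU_closed, VV_closed]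
  push_cast
  ring
end
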